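/- Let n be a positive integer and write d_{n,1}(x,q) = ∑_{m∈ℤ} C_m(x)·q^m with C_m(x) ∈ ℚ[x]. Set M := ⌊(n−1)²/4⌋. Then C_m = 0 for every m > M, and C_M(x) is a polynomial in x of degree ⌊n²/4⌋ whose leading coefficient is ∏_{i=1}^{n−1} ⌊i/2⌋!/i!. -/

import Mathlib

open Polynomial LaurentPolynomial Finset

noncomputable section

/-- The ring ℚ[x][q,q⁻¹]: Laurent polynomials in `q` over ℚ[x]. -/
abbrev RQ : Type := LaurentPolynomial (Polynomial ℚ)

/-- The polynomial binomial coefficient binom(y, m) = y(y-1)⋯(y-m+1)/m!. -/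
noncomputable def binomQ (y : Polynomial ℚ) (m : ℕ) : Polynomial ℚ :=
  Polynomial.C ((m.factorial : ℚ))⁻¹ * ∏ t ∈ Finset.range m, (y - (t : Polynomial ℚ))

/-- a_m(q) ∈ ℚ[x][q,q⁻¹]: a_m = ∑_{l=0}^{m-1}(-q)^l for m > 0, a_0 = 0,
a_m = -∑_{l=1}^{-m}(-q)^{-l} for m < 0.  Here q = T 1. -/
noncomputable def aQ (m : ℤ) : RQ :=
  if 0 < m then ∑ l ∈ Finset.range m.toNat, (-1 : RQ) ^ l * LaurentPolynomial.T (l : ℤ)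
  else -∑ l ∈ Finset.range (-m).toNat, (-1 : RQ) ^ (l + 1) * LaurentPolynomial.T (-(l + 1 : ℤ))

/-- The matrix D_{n,k}(x+c, q) (1-based (i,j) entry binom(x+c+i+j-2, j-1)·a_{j-i+k}(q)). -/
noncomputable def Dmat (n : ℕ) (k c : ℤ) : Matrix (Fin n) (Fin n) RQ :=
  Matrix.of fun i j =>
    LaurentPolynomial.C
      (binomQ (Polynomial.X + Polynomial.C (c : ℚ) + ((i : ℕ) : Polynomial ℚ)
        + ((j : ℕ) : Polynomial ℚ)) (j : ℕ)) *
    aQ ((j : ℤ) - (i : ℤ) + k)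

/-- d_{n,k}(x+c, q) := det D_{n,k}(x+c, q). -/
noncomputable def dd (n : ℕ) (k c : ℤ) : RQ := (Dmat n k c).det

/-!
Index rows and columns from `0` and fix a threshold `k`. The `(i, j)` entry has degree at most
`u i + v j` in `q`, where `u i = max (k - i) 0` and `v j = max (j - k) (-1)`, so the coefficient of
`q ^ (∑ u + ∑ v)` in the determinant is the determinant of the matrix of the coefficients of
`q ^ (u i + v j)`. Up to signs, the latter is the matrix `binom(x + i + j, j)` restricted to its
lower left and upper right corners, which overlap only in the row `k`.

For `k = ⌊(n + 1) / 2⌋` its determinant is a product of two corner minors of the binomial matrix if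
`n` is odd, and a sum of two such products if `n` is even, according to the corner that receives
the row `k`. Taking common factors out of the rows and columns of a corner minor leaves a
Vandermonde determinant. Thus the lower left minor is `1`, while the upper right minor with `r` rows
and first column `t` has degree `r * t` in `x`; for even `n` the term with `r = t = n / 2` therefore
dominates the one with `r = t + 2`.
-/

/-- `HasTopCoeff f a c` says that the Laurent polynomial `f` has degree at most `a` and that `c` is
its coefficient at `T ^ a`. The value `c = 0` is allowed, so that `a` may be any upper bound. -/
structure HasTopCoeff {R : Type*} [Semiring R] (f : R[T;T⁻¹]) (a : ℤ) (c : R) : Prop where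
  coeff_eq_zero : ∀ d, a < d → f.coeff d = 0
  coeff_eq : f.coeff a = c

namespace HasTopCoeff

theorem one {R : Type*} [Semiring R] : HasTopCoeff (1 : R[T;T⁻¹]) 0 1 where
  coeff_eq_zero d hd := by
    rw [← LaurentPolynomial.T_zero, LaurentPolynomial.T_apply, if_neg hd.ne]
  coeff_eq := by rw [← LaurentPolynomial.T_zero, LaurentPolynomial.T_apply, if_pos rfl]

theorem mul {R : Type*} [Semiring R] {f g : R[T;T⁻¹]} {a b : ℤ} {c e : R}
    (hf : HasTopCoeff f a c) (hg : HasTopCoeff g b e) : HasTopCoeff (f * g) (a + b) (c * e) := by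
  have le_of_mem {h : R[T;T⁻¹]} {t : ℤ} {r : R} (hh : HasTopCoeff h t r) {d : ℤ}
      (hd : d ∈ h.coeff.support) : d ≤ t :=
    not_lt.mp fun hlt => Finsupp.mem_support_iff.mp hd (hh.coeff_eq_zero d hlt)
  have coeff_mul (d : ℤ) (hd : a + b ≤ d) : (f * g).coeff d = f.coeff a * g.coeff (d - a) := by
    have hunique : UniqueAdd f.coeff.support g.coeff.support a (d - a) := by
      intro r s hr hs hrs
      have hra := le_of_mem hf hr
      have hsb := le_of_mem hg hs
      omega
    simpa only [add_sub_cancel] using AddMonoidAlgebra.coeff_mul_add_of_uniqueAdd hunique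
  refine ⟨fun d hd => ?_, ?_⟩
  · rw [coeff_mul d hd.le, hg.coeff_eq_zero (d - a) (by omega), mul_zero]
  · rw [coeff_mul _ le_rfl, add_sub_cancel_left, hf.coeff_eq, hg.coeff_eq]

theorem prod {R ι : Type*} [CommSemiring R] (s : Finset ι) {f : ι → R[T;T⁻¹]} {a : ι → ℤ}
    {c : ι → R} (h : ∀ i ∈ s, HasTopCoeff (f i) (a i) (c i)) :
    HasTopCoeff (∏ i ∈ s, f i) (∑ i ∈ s, a i) (∏ i ∈ s, c i) := by
  classical
  induction s using Finset.induction_on with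
  | empty => exact one
  | insert i s hi ih =>
    rw [forall_mem_insert] at h
    rw [prod_insert hi, prod_insert hi, sum_insert hi]
    exact h.1.mul (ih h.2)

theorem sum {R ι : Type*} [Semiring R] (s : Finset ι) {f : ι → R[T;T⁻¹]} {a : ℤ} {c : ι → R}
    (h : ∀ i ∈ s, HasTopCoeff (f i) a (c i)) : HasTopCoeff (∑ i ∈ s, f i) a (∑ i ∈ s, c i) where
  coeff_eq_zero d hd := by
    rw [AddMonoidAlgebra.coeff_sum, Finsupp.finsetSum_apply]
    exact sum_eq_zero fun i hi => (h i hi).coeff_eq_zero d hd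
  coeff_eq := by
    rw [AddMonoidAlgebra.coeff_sum, Finsupp.finsetSum_apply]
    exact sum_congr rfl fun i hi => (h i hi).coeff_eq

theorem units_smul {R : Type*} [Ring R] {f : R[T;T⁻¹]} {a : ℤ} {c : R} (u : ℤˣ)
    (h : HasTopCoeff f a c) : HasTopCoeff (u • f) a (u • c) where
  coeff_eq_zero d hd := by
    rw [Units.smul_def, AddMonoidAlgebra.coeff_smul_apply, h.coeff_eq_zero d hd, smul_zero]
  coeff_eq := by
    rw [Units.smul_def, AddMonoidAlgebra.coeff_smul_apply, h.coeff_eq, Units.smul_def]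

theorem C_mul {R : Type*} [Semiring R] {f : R[T;T⁻¹]} {a : ℤ} {c : R} (r : R)
    (h : HasTopCoeff f a c) : HasTopCoeff (LaurentPolynomial.C r * f) a (r * c) where
  coeff_eq_zero d hd := by
    rw [← LaurentPolynomial.smul_eq_C_mul, AddMonoidAlgebra.coeff_smul_apply,
      h.coeff_eq_zero d hd, smul_zero]
  coeff_eq := by
    rw [← LaurentPolynomial.smul_eq_C_mul, AddMonoidAlgebra.coeff_smul_apply, h.coeff_eq,
      smul_eq_mul]

/-- Every term of the Leibniz expansion has the same degree bound `∑ i, u i + ∑ j, v j`. -/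
theorem det {R ι : Type*} [CommRing R] [Fintype ι] [DecidableEq ι] {A : Matrix ι ι R[T;T⁻¹]}
    {B : Matrix ι ι R} {u v : ι → ℤ} (h : ∀ i j, HasTopCoeff (A i j) (u i + v j) (B i j)) :
    HasTopCoeff A.det (∑ i, u i + ∑ j, v j) B.det := by
  rw [Matrix.det_apply, Matrix.det_apply]
  refine sum _ fun σ _ => units_smul _ ?_
  rw [← Equiv.sum_comp σ u, ← sum_add_distrib]
  exact prod _ fun i _ => h (σ i) i

end HasTopCoeff

theorem coe_finRotate_pow (n k : ℕ) (i : Fin n) :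
    (((finRotate n) ^ k) i : ℕ) = (i + k) % n := by
  obtain _ | n := n
  · exact i.elim0
  induction k with
  | zero => rw [pow_zero, Equiv.Perm.one_apply, add_zero, Nat.mod_eq_of_lt i.2]
  | succ k ih =>
    rw [pow_succ', Equiv.Perm.mul_apply, finRotate_apply, Fin.val_add, ih]
    simp [← add_assoc]

theorem sign_finRotate_pow (a b : ℕ) :
    Equiv.Perm.sign (finRotate (a + b) ^ b) = (-1) ^ (a * b) := by
  rw [map_pow, sign_finRotate, ← pow_mul]
  refine neg_one_pow_congr ?_
  obtain _ | b := b
  · simp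
  · rw [Nat.add_succ_sub_one]
    grind

/-- The `r × r` submatrix of the infinite matrix `f` on the consecutive rows `s, s + 1, …` and the
consecutive columns `t, t + 1, …`. -/
def window {R : Type*} (f : ℕ → ℕ → R) (s t r : ℕ) : Matrix (Fin r) (Fin r) R :=
  Matrix.of fun i j => f (s + i) (t + j)

section Window

variable {R : Type*} [CommRing R]

theorem det_window_neg_one_pow_mul (f : ℕ → ℕ → R) (s t r : ℕ) :
    (window (fun i j => (-1) ^ (i + j) * f i j) s t r).det =
      (-1) ^ (r * (s + t)) * (window f s t r).det := by
  have hfactor : window (fun i j => (-1) ^ (i + j) * f i j) s t r =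
      Matrix.of fun i j : Fin r => (-1) ^ (s + (i : ℕ)) * (Matrix.of fun i j : Fin r =>
        (-1) ^ (t + (j : ℕ)) * window f s t r i j) i j := by
    ext i j
    simp only [window, Matrix.of_apply, pow_add, mul_assoc]
  have hsign (i : Fin r) : (-1 : R) ^ (s + (i : ℕ)) * (-1) ^ (t + (i : ℕ)) = (-1) ^ (s + t) := by
    rw [← pow_add]
    exact neg_one_pow_congr (by grind)
  rw [hfactor, Matrix.det_mul_column, Matrix.det_mul_row, ← mul_assoc, ← prod_mul_distrib]
  simp only [hsign, prod_const, card_univ, Fintype.card_fin]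
  rw [← pow_mul, mul_comm r]

theorem det_window_eq_det_fromBlocks (f : ℕ → ℕ → R) (a b : ℕ) :
    (window f 0 0 (a + b)).det = (-1) ^ (a * b) *
      (Matrix.fromBlocks (window f 0 b a) (Matrix.of fun (i : Fin a) (j : Fin b) => f i j)
        (Matrix.of fun (i : Fin b) (j : Fin a) => f (a + i) (b + j)) (window f a 0 b)).det := by
  have hrotate : Matrix.fromBlocks (window f 0 b a) (Matrix.of fun (i : Fin a) (j : Fin b) => f i j)
      (Matrix.of fun (i : Fin b) (j : Fin a) => f (a + i) (b + j)) (window f a 0 b) =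
      ((window f 0 0 (a + b)).submatrix id (finRotate (a + b) ^ b)).submatrix
        finSumFinEquiv finSumFinEquiv := by
    ext (i | i) (j | j)
    · simp [window, coe_finRotate_pow, add_comm b, Nat.mod_eq_of_lt]
    · simp [window, coe_finRotate_pow, add_right_comm a, Nat.mod_eq_of_lt,
        (j.2.trans_le (by omega) : (j : ℕ) < a + b)]
    · simp [window, coe_finRotate_pow, add_comm b, Nat.mod_eq_of_lt]
    · simp [window, coe_finRotate_pow, add_right_comm a, Nat.mod_eq_of_lt,
        (j.2.trans_le (by omega) : (j : ℕ) < a + b)]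
  rw [hrotate, Matrix.det_submatrix_equiv_self, Matrix.det_permute', sign_finRotate_pow,
    ← mul_assoc]
  push_cast
  rw [← mul_pow, neg_one_mul, neg_neg, one_pow, one_mul]

theorem det_window_of_zero_block {f : ℕ → ℕ → R} {a b : ℕ}
    (h : (∀ i < a, ∀ j < b, f i j = 0) ∨ ∀ i ≥ a, ∀ j ≥ b, f i j = 0) :
    (window f 0 0 (a + b)).det =
      (-1) ^ (a * b) * ((window f 0 b a).det * (window f a 0 b).det) := by
  rw [det_window_eq_det_fromBlocks]
  congr 1
  obtain h | h := h
  · rw [← Matrix.det_fromBlocks_zero₁₂]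
    congr 2
    ext1 i j
    exact h i i.2 j j.2
  · rw [← Matrix.det_fromBlocks_zero₂₁]
    congr 2
    ext1 i j
    exact h _ (Nat.le_add_right a i) _ (Nat.le_add_right b j)

/-- The signs of the upper right block cancel the sign of the permutation that moves the blocks to
the diagonal. -/
theorem det_window_of_signed_blocks {f g : ℕ → ℕ → R} {a b : ℕ}
    (hupper : ∀ i < a, ∀ j ≥ b, f i j = (-1) ^ (i + j) * g i j)
    (hlower : ∀ i ≥ a, ∀ j < b, f i j = g i j)
    (hzero : (∀ i < a, ∀ j < b, f i j = 0) ∨ ∀ i ≥ a, ∀ j ≥ b, f i j = 0) :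
    (window f 0 0 (a + b)).det = (window g 0 b a).det * (window g a 0 b).det := by
  have hur : window f 0 b a = window (fun i j => (-1) ^ (i + j) * g i j) 0 b a := by
    ext i j
    exact hupper _ (by omega) _ (Nat.le_add_right b j)
  have hll : window f a 0 b = window g a 0 b := by
    ext i j
    exact hlower _ (Nat.le_add_right a i) _ (by omega)
  rw [det_window_of_zero_block hzero, hur, hll, det_window_neg_one_pow_mul, zero_add, ← mul_assoc,
    ← mul_assoc, ← mul_pow, neg_one_mul, neg_neg, one_pow, one_mul]

theorem det_window_of_row_eq_add {f g h : ℕ → ℕ → R} {k n : ℕ} (hkn : k < n)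
    (hg : ∀ i ≠ k, f i = g i) (hh : ∀ i ≠ k, f i = h i) (hk : f k = g k + h k) :
    (window f 0 0 n).det = (window g 0 0 n).det + (window h 0 0 n).det := by
  have hupdate {e : ℕ → ℕ → R} (he : ∀ i ≠ k, f i = e i) :
      window e 0 0 n = (window f 0 0 n).updateRow ⟨k, hkn⟩ fun j => e k j := by
    ext i j
    obtain rfl | hi := eq_or_ne i ⟨k, hkn⟩
    · simp [window]
    · have hik : (i : ℕ) ≠ k := fun hik => hi (Fin.ext hik)
      simp [window, Matrix.updateRow_ne hi, he i hik]
  have hupdate_self : window f 0 0 n =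
      (window f 0 0 n).updateRow ⟨k, hkn⟩ ((fun j : Fin n => g k j) + fun j : Fin n => h k j) := by
    refine (hupdate fun _ _ => rfl).trans ?_
    rw [hk]
    rfl
  rw [hupdate_self, Matrix.det_updateRow_add, ← hupdate hg, ← hupdate hh]

end Window

theorem ascPochhammer_eval_X_add_C {R : Type*} [CommSemiring R] (n : ℕ) (a : R) :
    (ascPochhammer R[X] n).eval (Polynomial.X + Polynomial.C a) =
      (ascPochhammer R n).comp (Polynomial.X + Polynomial.C a) := by
  rw [← ascPochhammer_map Polynomial.C, eval_map]
  rfl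

theorem det_vandermonde_natCast (R : Type*) [CommRing R] (r : ℕ) :
    (Matrix.vandermonde fun i : Fin r => (i : R)).det = ∏ k ∈ range r, (k.factorial : R) := by
  obtain _ | r := r
  · rw [Matrix.det_fin_zero, prod_range_zero]
  · rw [Matrix.det_vandermonde_id_eq_superFactorial, ← Nat.prod_range_succ_factorial,
      Nat.cast_prod]

theorem det_ascPochhammer_eval {R : Type*} [CommRing R] [IsDomain R] (t r : ℕ) (y : R) :
    (Matrix.of fun i j : Fin r => (ascPochhammer R (t + j)).eval (y + (i : ℕ))).det =
      (∏ k ∈ range r, (k.factorial : R)) *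
        ∏ i ∈ range r, (ascPochhammer R t).eval (y + (i : ℕ)) := by
  have hfactor : (Matrix.of fun i j : Fin r => (ascPochhammer R (t + j)).eval (y + (i : ℕ))) =
      Matrix.of fun i j : Fin r => (ascPochhammer R t).eval (y + (i : ℕ)) *
        (Matrix.of fun i j : Fin r => (ascPochhammer R j).eval ((i : ℕ) + (y + t))) i j := by
    ext i j
    rw [Matrix.of_apply, Matrix.of_apply, Matrix.of_apply, ← ascPochhammer_mul, eval_mul,
      eval_comp, eval_add, eval_X, eval_natCast, add_assoc, add_left_comm]
  rw [hfactor, Matrix.det_mul_column,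
    ← Matrix.det_eval_matrixOfPolynomials_eq_det_vandermonde _ (fun j : Fin r => ascPochhammer R j)
      (fun j => ascPochhammer_natDegree _ _) (fun j => monic_ascPochhammer _ _),
    Matrix.det_vandermonde_add, det_vandermonde_natCast,
    Fin.prod_univ_eq_prod_range fun i => (ascPochhammer R t).eval (y + (i : ℕ)), mul_comm]

/-- The factor `binom(x + c + i + j, j)` of the entries of `Dmat n k c`, with indices starting
at `0`. -/
def binomEntry (c : ℤ) (i j : ℕ) : ℚ[X] :=
  binomQ (Polynomial.X + Polynomial.C (c : ℚ) + (i : ℚ[X]) + (j : ℚ[X])) j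

theorem binomEntry_eq (c : ℤ) (i j : ℕ) :
    binomEntry c i j = Polynomial.C (j.factorial : ℚ)⁻¹ *
      (ascPochhammer ℚ[X] j).eval (Polynomial.X + Polynomial.C (c : ℚ) + (i : ℚ[X]) + 1) := by
  rw [binomEntry, binomQ, ← descPochhammer_eval_eq_prod_range,
    descPochhammer_eval_eq_ascPochhammer, add_sub_cancel_right]

section WindowBinomEntry

variable (c : ℤ) (s t r : ℕ)

theorem det_window_binomEntry :
    (window (binomEntry c) s t r).det =
      Polynomial.C (∏ k ∈ range r, (k.factorial : ℚ) / ((t + k).factorial : ℚ)) *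
        ∏ i ∈ range r, (ascPochhammer ℚ t).comp
          (Polynomial.X + Polynomial.C (c + s + 1 + i : ℚ)) := by
  set y : ℚ[X] := Polynomial.X + Polynomial.C (c + s + 1 : ℚ) with hy
  have hfactor : window (binomEntry c) s t r =
      Matrix.of fun i j : Fin r => Polynomial.C ((t + j).factorial : ℚ)⁻¹ *
        (Matrix.of fun i j : Fin r => (ascPochhammer ℚ[X] (t + j)).eval (y + (i : ℕ))) i j := by
    ext1 i j
    simp only [window, Matrix.of_apply, binomEntry_eq]
    congr 2
    simp only [hy, Nat.cast_add, map_add, map_natCast, map_one]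
    ring
  have heval (i : ℕ) : (ascPochhammer ℚ[X] t).eval (y + (i : ℚ[X])) =
      (ascPochhammer ℚ t).comp (Polynomial.X + Polynomial.C (c + s + 1 + i : ℚ)) := by
    rw [← ascPochhammer_eval_X_add_C, hy, add_assoc, ← Polynomial.C_eq_natCast, ← map_add]
  rw [hfactor, Matrix.det_mul_row, det_ascPochhammer_eval, ← mul_assoc,
    Fin.prod_univ_eq_prod_range fun k => Polynomial.C ((t + k).factorial : ℚ)⁻¹,
    ← prod_mul_distrib, map_prod]
  simp only [heval, div_eq_inv_mul, map_mul, Polynomial.C_eq_natCast]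

theorem det_window_binomEntry_zero : (window (binomEntry c) s 0 r).det = 1 := by
  rw [det_window_binomEntry]
  simp [Nat.factorial_ne_zero]

theorem leadingCoeff_det_window_binomEntry :
    (window (binomEntry c) s t r).det.leadingCoeff =
      ∏ k ∈ range r, (k.factorial : ℚ) / ((t + k).factorial : ℚ) := by
  rw [det_window_binomEntry, leadingCoeff_mul, leadingCoeff_C,
    monic_prod_of_monic _ _ fun _ _ => (monic_ascPochhammer ℚ t).comp_X_add_C _, mul_one]

theorem natDegree_det_window_binomEntry :
    (window (binomEntry c) s t r).det.natDegree = r * t := by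
  have hne : ∏ k ∈ range r, (k.factorial : ℚ) / ((t + k).factorial : ℚ) ≠ 0 :=
    prod_ne_zero_iff.mpr fun k _ => by positivity
  rw [det_window_binomEntry, natDegree_C_mul hne,
    natDegree_prod_of_monic _ _ fun _ _ => (monic_ascPochhammer ℚ t).comp_X_add_C _]
  simp only [natDegree_comp, ascPochhammer_natDegree, natDegree_X_add_C, mul_one, sum_const,
    card_range, smul_eq_mul]

end WindowBinomEntry

theorem coeff_neg_one_pow_mul_T {R : Type*} [Ring R] (l : ℕ) (e d : ℤ) :
    ((-1 : R[T;T⁻¹]) ^ l * LaurentPolynomial.T e).coeff d = if e = d then (-1) ^ l else 0 := by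
  have hsingle : (-1 : R[T;T⁻¹]) ^ l * LaurentPolynomial.T e =
      AddMonoidAlgebra.single e ((-1 : R) ^ l) := by
    rw [LaurentPolynomial.single_eq_C_mul_T, map_pow, map_neg, map_one]
  rw [hsingle, AddMonoidAlgebra.coeff_single, Finsupp.single_apply]

theorem coeff_aQ {z d : ℤ} (hzd : z ≤ d + 1) (hd : -1 ≤ d) :
    (aQ z).coeff d = (if d = -1 then 1 else 0) + if d + 1 = z then (-1) ^ d.natAbs else 0 := by
  obtain hz | hz := lt_or_ge 0 z
  · lift d to ℕ using by omega
    rw [aQ, if_pos hz, AddMonoidAlgebra.coeff_sum, Finsupp.finsetSum_apply]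
    simp only [coeff_neg_one_pow_mul_T, Nat.cast_inj, sum_ite_eq', Finset.mem_range,
      Int.natAbs_natCast]
    rw [if_neg (by omega : (d : ℤ) ≠ -1), zero_add]
    exact if_congr (by omega) rfl rfl
  · have hindex (l : ℕ) : -(l + 1 : ℤ) = d ↔ l = 0 ∧ d = -1 := by omega
    rw [aQ, if_neg hz.not_gt, AddMonoidAlgebra.coeff_neg, AddMonoidAlgebra.coeff_sum,
      Finsupp.neg_apply, Finsupp.finsetSum_apply]
    simp only [coeff_neg_one_pow_mul_T, hindex, ite_and, sum_ite_eq', Finset.mem_range]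
    split_ifs <;> first | omega | simp_all

theorem hasTopCoeff_aQ {z a : ℤ} (hza : z ≤ a + 1) (ha : -1 ≤ a) :
    HasTopCoeff (aQ z) a
      ((if a = -1 then 1 else 0) + if a + 1 = z then (-1) ^ a.natAbs else 0) where
  coeff_eq_zero d hd := by
    rw [coeff_aQ (by omega) (by omega), if_neg (by omega), if_neg (by omega), add_zero]
  coeff_eq := coeff_aQ hza ha

/-- Together with `colWeight`, a bound `rowWeight k i + colWeight k j` for the degree in `q` of the
`(i, j)` entry of `Dmat n 1 c`, for every choice of `k`. -/
def rowWeight (k i : ℕ) : ℤ := max ((k : ℤ) - i) 0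

/-- The contribution of the column `j` to the degree bound described at `rowWeight`. -/
def colWeight (k j : ℕ) : ℤ := max ((j : ℤ) - k) (-1)

theorem two_mul_sum_rowWeight_add_colWeight (k r : ℕ) :
    2 * ∑ i ∈ range (k + r), (rowWeight k i + colWeight k i) =
      (k : ℤ) * (k - 1) + r * (r - 1) := by
  induction k with
  | zero =>
    have hweight (i : ℕ) : rowWeight 0 i + colWeight 0 i = i := by
      rw [rowWeight, colWeight]
      omega
    simp only [hweight, zero_add]
    induction r with
    | zero => simp
    | succ r ih =>
      rw [sum_range_succ, mul_add, ih]
      push_cast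
      ring
  | succ k ih =>
    have hshift (i : ℕ) : rowWeight (k + 1) (i + 1) + colWeight (k + 1) (i + 1) =
        rowWeight k i + colWeight k i := by
      simp only [rowWeight, colWeight]
      omega
    have hfirst : rowWeight (k + 1) 0 + colWeight (k + 1) 0 = k := by
      simp only [rowWeight, colWeight]
      omega
    rw [add_right_comm, sum_range_succ', hfirst, mul_add]
    simp only [hshift, ih]
    push_cast
    ring

/-- The binomial matrix, restricted to the lower left corner `l ≤ i`, `j < k` and, with checkerboard
signs, to the upper right corner `i < u`, `k ≤ j + 1`. For `l = k` and `u = k + 1` these are the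
coefficients of `Dmat n 1 c` in the degrees `rowWeight k i + colWeight k j`. -/
def cornerEntry (c : ℤ) (l u k i j : ℕ) : ℚ[X] :=
  binomEntry c i j *
    ((if l ≤ i ∧ j < k then 1 else 0) + if i < u ∧ k ≤ j + 1 then (-1) ^ (i + j) else 0)

theorem hasTopCoeff_Dmat (n k : ℕ) (c : ℤ) (i j : Fin n) :
    HasTopCoeff (Dmat n 1 c i j) (rowWeight k i + colWeight k j)
      (cornerEntry c k (k + 1) k i j) := by
  have htop : HasTopCoeff (aQ ((j : ℤ) - i + 1)) (rowWeight k i + colWeight k j)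
      ((if k ≤ i ∧ (j : ℕ) < k then 1 else 0) +
        if (i : ℕ) < k + 1 ∧ k ≤ j + 1 then (-1) ^ ((i : ℕ) + j) else 0) := by
    convert hasTopCoeff_aQ (z := (j : ℤ) - i + 1) (a := rowWeight k i + colWeight k j) ?_ ?_ using 2
    · exact if_congr (by simp only [rowWeight, colWeight]; omega) rfl rfl
    · split_ifs with hcorner hdeg hdeg
      · exact neg_one_pow_congr (by grind)
      · simp only [rowWeight, colWeight] at hdeg; omega
      · simp only [rowWeight, colWeight] at hdeg; omega
      · rfl
    all_goals simp only [rowWeight, colWeight]; omega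
  exact htop.C_mul _

theorem hasTopCoeff_dd (n k : ℕ) (c : ℤ) :
    HasTopCoeff (dd n 1 c) (∑ i ∈ range n, (rowWeight k i + colWeight k i))
      (window (cornerEntry c k (k + 1) k) 0 0 n).det := by
  rw [← Fin.sum_univ_eq_sum_range, sum_add_distrib]
  refine HasTopCoeff.det fun i j => ?_
  simpa only [window, Matrix.of_apply, zero_add] using hasTopCoeff_Dmat n k c i j

theorem det_window_cornerEntry {c : ℤ} {a b u k : ℕ}
    (h : k = b + 1 ∧ a ≤ u ∨ k = b ∧ u = a) :
    (window (cornerEntry c a u k) 0 0 (a + b)).det = (window (binomEntry c) 0 b a).det := by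
  rw [det_window_of_signed_blocks (g := binomEntry c), det_window_binomEntry_zero, mul_one]
  · intro i hi j hj
    rw [cornerEntry, if_neg (by omega), if_pos (by omega), zero_add, mul_comm]
  · intro i hi j hj
    rw [cornerEntry, if_pos (by omega), if_neg (by omega), add_zero, mul_one]
  · refine h.imp (fun hk i hi j hj => ?_) fun hk i hi j hj => ?_ <;>
      rw [cornerEntry, if_neg (by omega), if_neg (by omega), add_zero, mul_zero]

/-- The two corners overlap only in the row `k`. -/
theorem det_window_cornerEntry_overlap (c : ℤ) {n k : ℕ} (hkn : k < n) :
    (window (cornerEntry c k (k + 1) k) 0 0 n).det =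
      (window (cornerEntry c k k k) 0 0 n).det +
        (window (cornerEntry c (k + 1) (k + 1) k) 0 0 n).det := by
  refine det_window_of_row_eq_add hkn (fun i hi => ?_) (fun i hi => ?_) ?_
  · ext1 j
    simp only [cornerEntry, (by omega : i < k + 1 ↔ i < k)]
  · ext1 j
    simp only [cornerEntry, (by omega : k ≤ i ↔ k + 1 ≤ i)]
  · ext1 j
    simp [cornerEntry, mul_add]

theorem hasTopCoeff_dd_odd (c : ℤ) (m : ℕ) :
    HasTopCoeff (dd (m + 1 + m) 1 c) (m * m) (window (binomEntry c) 0 m (m + 1)).det := by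
  have hsum : ∑ i ∈ range (m + 1 + m), (rowWeight (m + 1) i + colWeight (m + 1) i) = m * m := by
    have htwice := two_mul_sum_rowWeight_add_colWeight (m + 1) m
    push_cast at htwice
    linarith
  have htop := hasTopCoeff_dd (m + 1 + m) (m + 1) c
  rwa [hsum, det_window_cornerEntry (.inl ⟨rfl, Nat.le_succ _⟩)] at htop

theorem hasTopCoeff_dd_even (c : ℤ) (m : ℕ) :
    HasTopCoeff (dd (m + 1 + (m + 1)) 1 c) ((m + 1) * m)
      ((window (binomEntry c) 0 (m + 1) (m + 1)).det +
        (window (binomEntry c) 0 m (m + 2)).det) := by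
  have hsum : ∑ i ∈ range (m + 1 + (m + 1)), (rowWeight (m + 1) i + colWeight (m + 1) i) =
      (m + 1) * m := by
    have htwice := two_mul_sum_rowWeight_add_colWeight (m + 1) (m + 1)
    push_cast at htwice
    linarith
  have hsmall : (window (cornerEntry c (m + 2) (m + 2) (m + 1)) 0 0 (m + 1 + (m + 1))).det =
      (window (binomEntry c) 0 m (m + 2)).det := by
    rw [(by omega : m + 1 + (m + 1) = m + 2 + m), det_window_cornerEntry (.inl ⟨rfl, le_rfl⟩)]
  have htop := hasTopCoeff_dd (m + 1 + (m + 1)) (m + 1) c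
  rwa [hsum, det_window_cornerEntry_overlap c (by omega),
    det_window_cornerEntry (.inr ⟨rfl, rfl⟩), hsmall] at htop

theorem prod_range_div_two {M : Type*} [CommMonoid M] (g : ℕ → M) (n : ℕ) :
    ∏ i ∈ range n, g (i / 2) =
      (∏ k ∈ range ((n + 1) / 2), g k) * ∏ k ∈ range (n / 2), g k := by
  induction n with
  | zero => simp
  | succ n ih =>
    rw [prod_range_succ, ih, (by omega : (n + 1 + 1) / 2 = n / 2 + 1), prod_range_succ _ (n / 2)]
    ac_rfl

theorem prod_range_factorial_div_two_div_factorial (K : Type*) [Field K] [CharZero K] (n : ℕ) :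
    ∏ i ∈ range n, ((i / 2).factorial : K) / (i.factorial : K) =
      ∏ k ∈ range ((n + 1) / 2), (k.factorial : K) / ((n / 2 + k).factorial : K) := by
  have hsplit : ∏ i ∈ range n, (i.factorial : K) = (∏ i ∈ range (n / 2), (i.factorial : K)) *
      ∏ k ∈ range ((n + 1) / 2), ((n / 2 + k).factorial : K) := by
    rw [← prod_range_add, (by omega : n / 2 + (n + 1) / 2 = n)]
  have hne : ∏ i ∈ range (n / 2), (i.factorial : K) ≠ 0 :=
    prod_ne_zero_iff.mpr fun i _ => Nat.cast_ne_zero.mpr i.factorial_ne_zero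
  rw [prod_div_distrib, prod_div_distrib, prod_range_div_two fun k => (k.factorial : K), hsplit,
    mul_comm, mul_div_mul_left _ _ hne]

theorem sq_div_four_eq (n : ℕ) : n ^ 2 / 4 = (n + 1) / 2 * (n / 2) := by
  obtain ⟨m, rfl | rfl⟩ := n.even_or_odd'
  · rw [(by omega : (2 * m + 1) / 2 = m), (by omega : 2 * m / 2 = m),
      (by ring : (2 * m) ^ 2 = 4 * (m * m)), Nat.mul_div_cancel_left _ (by norm_num)]
  · rw [(by omega : (2 * m + 1 + 1) / 2 = m + 1), (by omega : (2 * m + 1) / 2 = m),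
      (by ring : (2 * m + 1) ^ 2 = 1 + 4 * ((m + 1) * m)), Nat.add_mul_div_left _ _ (by norm_num)]
    simp

theorem exists_hasTopCoeff_dd (c : ℤ) (n : ℕ) : ∃ P : ℚ[X],
    HasTopCoeff (dd (n + 1) 1 c) ((n ^ 2 / 4 : ℕ) : ℤ) P ∧
    P.natDegree = (n + 1 + 1) / 2 * ((n + 1) / 2) ∧
    P.leadingCoeff = ∏ k ∈ range ((n + 1 + 1) / 2),
      (k.factorial : ℚ) / (((n + 1) / 2 + k).factorial : ℚ) := by
  rw [sq_div_four_eq]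
  obtain ⟨m, rfl | rfl⟩ := n.even_or_odd'
  · rw [(by omega : (2 * m + 1 + 1) / 2 = m + 1), (by omega : (2 * m + 1) / 2 = m),
      (by omega : 2 * m / 2 = m), (by omega : 2 * m + 1 = m + 1 + m), Nat.cast_mul]
    exact ⟨_, hasTopCoeff_dd_odd c m, natDegree_det_window_binomEntry ..,
      leadingCoeff_det_window_binomEntry ..⟩
  · rw [(by omega : (2 * m + 1 + 1 + 1) / 2 = m + 1), (by omega : (2 * m + 1 + 1) / 2 = m + 1),
      (by omega : (2 * m + 1) / 2 = m), (by omega : 2 * m + 1 + 1 = m + 1 + (m + 1)),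
      Nat.cast_mul, Nat.cast_succ]
    have hlt : (window (binomEntry c) 0 m (m + 2)).det.natDegree <
        (window (binomEntry c) 0 (m + 1) (m + 1)).det.natDegree := by
      rw [natDegree_det_window_binomEntry, natDegree_det_window_binomEntry]
      linarith
    refine ⟨_, hasTopCoeff_dd_even c m, ?_, ?_⟩
    · rw [natDegree_add_eq_left_of_natDegree_lt hlt, natDegree_det_window_binomEntry]
    · rw [leadingCoeff_add_of_degree_lt' (degree_lt_degree hlt),
        leadingCoeff_det_window_binomEntry]

/-- writing d_{n,1}(x,q) = ∑_m C_m(x)·q^m (here C_m(x) = (dd n 1 0) m, the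
coefficient of q^m), with M := ⌊(n-1)²/4⌋ we have C_m = 0 for m > M, and C_M has degree
⌊n²/4⌋ with leading coefficient ∏_{i=1}^{n-1}⌊i/2⌋!/i!. -/
theorem statement7 (n : ℕ) (hn : 1 ≤ n) :
    (∀ m : ℤ, (((n - 1) ^ 2 / 4 : ℕ) : ℤ) < m → (dd n 1 0).coeff m = 0) ∧
    ((dd n 1 0).coeff (((n - 1) ^ 2 / 4 : ℕ) : ℤ)).natDegree = n ^ 2 / 4 ∧
    ((dd n 1 0).coeff (((n - 1) ^ 2 / 4 : ℕ) : ℤ)).leadingCoeff =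
      ∏ i ∈ Finset.range (n - 1),
        (((i + 1) / 2).factorial : ℚ) / ((i + 1).factorial : ℚ) := by
  obtain ⟨n, rfl⟩ := Nat.exists_eq_add_of_le' hn
  obtain ⟨P, hP, hdegree, hlead⟩ := exists_hasTopCoeff_dd 0 n
  rw [Nat.add_sub_cancel, hP.coeff_eq, hdegree, hlead]
  refine ⟨hP.coeff_eq_zero, (sq_div_four_eq (n + 1)).symm, ?_⟩
  rw [← prod_range_factorial_div_two_div_factorial, prod_range_succ']
  simp

end
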